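/- A regular ω-language F ⊆ X^ω is of first Baire category in the Cantor space X^ω if and only if μ(F) = 0 for every Borel measure μ on X^ω with 0 < μ(X^ω) < ∞, with support supp(μ) = X^ω, and satisfying the balance condition. -/

import Mathlib

open Set MeasureTheory Computability

namespace AutoBaire

/-- The Cantor topology on the space of ω-words over `X`:
the product of the discrete topology on `X`. -/
def cantorTop (X : Type) : TopologicalSpace (ℕ → X) :=
  @Pi.topologicalSpace ℕ (fun _ => X) (fun _ => ⊥)

/-- The Borel σ-algebra of the Cantor space. -/
def cantorBorel (X : Type) : MeasurableSpace (ℕ → X) :=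
  @borel (ℕ → X) (cantorTop X)

variable {X : Type}

/-- Concatenation `w·ξ` of a finite word with an ω-word. -/
def wcat (w : List X) (ξ : ℕ → X) : ℕ → X :=
  Stream'.appendStream' w ξ

/-- The ball (cylinder) `w·X^ω`. -/
def cyl (w : List X) : Set (ℕ → X) := {ξ | ∃ η : ℕ → X, ξ = wcat w η}

/-- The ω-language `W·A` for a language `W` and an ω-language `A`. -/
def catOmega (W : Language X) (A : Set (ℕ → X)) : Set (ℕ → X) :=
  {ξ | ∃ w ∈ W, ∃ η ∈ A, ξ = wcat w η}

/-- `V^ω`: the set of ω-words that are infinite concatenations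
`v₁·v₂·⋯` of non-empty words `vᵢ ∈ V`. -/
def omegaPow (V : Language X) : Set (ℕ → X) :=
  {ξ | ∃ f : ℕ → List X, (∀ i, f i ∈ V ∧ f i ≠ []) ∧
    ∀ k, ξ ∈ cyl (((List.range k).map f).flatten)}

/-- Regular languages: those obtained from finite languages via the operations
union, concatenation and star. -/
inductive IsRegLang : Language X → Prop
  | finite (W : Language X) : (W : Set (List X)).Finite → IsRegLang W
  | union (W V : Language X) : IsRegLang W → IsRegLang V → IsRegLang (W + V)
  | concat (W V : Language X) : IsRegLang W → IsRegLang V → IsRegLang (W * V)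
  | star (W : Language X) : IsRegLang W → IsRegLang (W∗)

/-- Regular ω-languages: finite unions `⋃ᵢ Wᵢ·Vᵢ^ω` with `Wᵢ, Vᵢ` regular. -/
def IsRegOmega (F : Set (ℕ → X)) : Prop :=
  ∃ (n : ℕ) (W V : Fin n → Language X),
    (∀ i, IsRegLang (W i) ∧ IsRegLang (V i)) ∧
    F = ⋃ i, catOmega (W i) (omegaPow (V i))

/-- `X*·w·X^ω`: the set of ω-words containing `w` as an infix. -/
def infixOcc (w : List X) : Set (ℕ → X) :=
  {ξ | ∃ u : List X, ξ ∈ cyl (u ++ w)}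

/-- An ω-word is disjunctive if every finite word occurs in it as an infix. -/
def Disjunctive (ξ : ℕ → X) : Prop := ∀ w : List X, ξ ∈ infixOcc w

/-- Ultimately periodic ω-words: `ξ = w·v·v·v·⋯` with `v ≠ e`. -/
def UltPeriodic (ξ : ℕ → X) : Prop :=
  ∃ (w v : List X) (h : v ≠ []), ξ = wcat w (Stream'.cycle v h)

/-- The Automatic Baire property: `F Δ E ⊆ F'` for some regular open
ω-language `E` and some regular ω-language `F'` of first Baire category. -/
def HasABP (F : Set (ℕ → X)) : Prop :=
  ∃ E F' : Set (ℕ → X),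
    IsRegOmega E ∧ @IsOpen _ (cantorTop X) E ∧
    IsRegOmega F' ∧ @IsMeagre _ (cantorTop X) F' ∧
    symmDiff F E ⊆ F'

/-- The measure is finite and non-null: `0 < μ(X^ω) < ∞`. -/
def FiniteNonNull (μ : @MeasureTheory.Measure (ℕ → X) (cantorBorel X)) : Prop :=
  0 < μ Set.univ ∧ μ Set.univ < ⊤

/-- `supp(μ) = X^ω`: every non-empty open set has positive measure. -/
def FullSupport (μ : @MeasureTheory.Measure (ℕ → X) (cantorBorel X)) : Prop :=
  ∀ U : Set (ℕ → X), @IsOpen _ (cantorTop X) U → U.Nonempty → 0 < μ U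

/-- The balance condition: there is `c > 0` such that for all `w ∈ X*`, `x ∈ X`
either `μ(wx·X^ω) = 0` or `c·μ(w·X^ω) ≤ μ(wx·X^ω)`. -/
def Balanced (μ : @MeasureTheory.Measure (ℕ → X) (cantorBorel X)) : Prop :=
  ∃ c : ENNReal, 0 < c ∧ ∀ (w : List X) (x : X),
    μ (cyl (w ++ [x])) = 0 ∨ c * μ (cyl w) ≤ μ (cyl (w ++ [x]))

/-!
Regularity enters through the finiteness of the set of left quotients: it turns density of a
language into bounded density, where every word reaches the language within `k` more letters.
A boundedly dense language is hit by almost every `ω`-word. For category this is because the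
`ω`-words with a prefix in a dense language form a dense open set. For a balanced measure each
round of `k` letters hits with proportion at least `c ^ k`, so the mass that never hits decays
geometrically.

Now consider `W·V^ω` with `W` nonempty. If every word can be prolonged to one that is no prefix of
a word of `V∗`, almost every `ω`-word contains such an obstruction after each of its prefixes, and
`W·V^ω` is negligible. Otherwise some left quotient `v⁻¹V∗` is dense, so after every occurrence of
`v` almost every `ω`-word goes on with some `q ∈ v⁻¹V∗` followed by `v` again. Hence almost all of
`v·X^ω` lies in `V^ω`, and `W·V^ω` is not negligible. The criterion does not mention the notion of
smallness, so category agrees with every balanced measure of full support, and one such measure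
exists: the uniform one.
-/

section Regular

variable {α : Type*} {L M : Language α}

theorem isRegular_of_finite_of_leftQuotient_mem {𝒬 : Set (Language α)} (hfin : 𝒬.Finite)
    (hL : L ∈ 𝒬) (hstep : ∀ A ∈ 𝒬, ∀ a, A.leftQuotient [a] ∈ 𝒬) : L.IsRegular := by
  refine .of_finite_range_leftQuotient (hfin.subset (range_subset_iff.2 fun u => ?_))
  induction u using List.reverseRecOn with
  | nil => exact hL
  | append_singleton u a ih =>
    rw [Language.leftQuotient_append]
    exact hstep _ ih a

theorem isRegular_of_finite (hL : (L : Set (List α)).Finite) : L.IsRegular := by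
  have hsuffixes : (⋃ w ∈ (L : Set (List α)), {z | z <:+ w}).Finite :=
    hL.biUnion fun w _ => (List.finite_toSet w.tails).subset fun z hz => (List.mem_tails z w).2 hz
  refine .of_finite_range_leftQuotient (hsuffixes.powerset.subset ?_)
  rintro _ ⟨u, rfl⟩ z hz
  exact mem_biUnion (show u ++ z ∈ (L : Set (List α)) from hz) ⟨u, rfl⟩

theorem isRegular_leftQuotient (hL : L.IsRegular) (u : List α) :
    (L.leftQuotient u).IsRegular := by
  refine .of_finite_range_leftQuotient (hL.finite_range_leftQuotient.subset ?_)
  rintro _ ⟨v, rfl⟩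
  exact ⟨u ++ v, L.leftQuotient_append u v⟩

theorem leftQuotient_singleton_mul_of_nil_notMem (hL : [] ∉ L) (a : α) :
    (L * M).leftQuotient [a] = L.leftQuotient [a] * M := by
  ext x
  simp only [Language.mem_leftQuotient, Language.mem_mul, List.singleton_append]
  constructor
  · rintro ⟨_ | ⟨b, p⟩, hp, q, hq, h⟩
    · exact absurd hp hL
    · obtain ⟨rfl, rfl⟩ := List.cons_eq_cons.1 h
      exact ⟨p, hp, q, hq, rfl⟩
  · rintro ⟨p, hp, q, hq, rfl⟩
    exact ⟨a :: p, hp, q, hq, rfl⟩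

theorem leftQuotient_singleton_mul_of_nil_mem (hL : [] ∈ L) (a : α) :
    (L * M).leftQuotient [a] = L.leftQuotient [a] * M + M.leftQuotient [a] := by
  ext x
  simp only [Language.mem_add, Language.mem_leftQuotient, Language.mem_mul, List.singleton_append]
  constructor
  · rintro ⟨_ | ⟨b, p⟩, hp, q, hq, h⟩
    · exact .inr (h ▸ hq)
    · obtain ⟨rfl, rfl⟩ := List.cons_eq_cons.1 h
      exact .inl ⟨p, hp, q, hq, rfl⟩
  · rintro (⟨p, hp, q, hq, rfl⟩ | hx)
    · exact ⟨a :: p, hp, q, hq, rfl⟩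
    · exact ⟨[], hL, a :: x, hx, rfl⟩

theorem exists_append_of_mem_kstar {t : List α} (ht : t ∈ L∗) (hne : t ≠ []) :
    ∃ a ∈ L, a ≠ [] ∧ ∃ t' ∈ L∗, t = a ++ t' := by
  obtain ⟨_ | ⟨a, S⟩, rfl, hS⟩ := Language.mem_kstar_iff_exists_nonempty.1 ht
  · exact absurd rfl hne
  · obtain ⟨⟨haL, ha⟩, hS⟩ := List.forall_mem_cons.1 hS
    exact ⟨a, haL, ha, S.flatten, Language.join_mem_kstar fun y hy => (hS y hy).1, rfl⟩

theorem leftQuotient_singleton_kstar (a : α) :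
    (L∗).leftQuotient [a] = L.leftQuotient [a] * L∗ := by
  ext x
  constructor
  · intro hx
    obtain ⟨_ | ⟨b, p⟩, hpL, hp, q, hq, h⟩ := exists_append_of_mem_kstar hx (List.cons_ne_nil a x)
    · exact absurd rfl hp
    · obtain ⟨rfl, rfl⟩ := List.cons_eq_cons.1 h
      exact ⟨p, hpL, q, hq, rfl⟩
  · rintro ⟨p, hp, q, hq, rfl⟩
    have : (a :: p) ++ q ∈ L * L∗ := ⟨a :: p, hp, q, hq, rfl⟩
    rw [← Language.one_add_self_mul_kstar_eq_kstar]
    exact .inr this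

theorem leftQuotient_sSup (S : Set (Language α)) (u : List α) :
    (sSup S).leftQuotient u = sSup ((Language.leftQuotient · u) '' S) := by
  ext x
  simp only [sSup_eq_iSup, iSup_image, Language.mem_iSup, Language.mem_leftQuotient]

theorem exists_finite_leftQuotient_closed_of_isRegular (hL : L.IsRegular) : ∃ 𝒬 : Set (Language α),
    𝒬.Finite ∧ 0 ∈ 𝒬 ∧ L ∈ 𝒬 ∧ (∀ A ∈ 𝒬, ∀ B ∈ 𝒬, A + B ∈ 𝒬) ∧
      ∀ A ∈ 𝒬, ∀ a, A.leftQuotient [a] ∈ 𝒬 := by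
  refine ⟨sSup '' 𝒫 (range L.leftQuotient), hL.finite_range_leftQuotient.powerset.image _,
    ⟨∅, empty_subset _, sSup_empty⟩, ⟨{L}, ?_, sSup_singleton⟩, ?_, ?_⟩
  · exact singleton_subset_iff.2 ⟨[], L.leftQuotient_nil⟩
  · rintro _ ⟨S, hS, rfl⟩ _ ⟨T, hT, rfl⟩
    exact ⟨S ∪ T, union_subset hS hT, sSup_union⟩
  · rintro _ ⟨S, hS, rfl⟩ a
    refine ⟨_, ?_, (leftQuotient_sSup S [a]).symm⟩
    rintro _ ⟨A, hA, rfl⟩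
    obtain ⟨u, rfl⟩ := hS hA
    exact ⟨u ++ [a], L.leftQuotient_append u [a]⟩

theorem isRegular_mul (hL : L.IsRegular) (hM : M.IsRegular) : (L * M).IsRegular := by
  obtain ⟨𝒜, h𝒜fin, -, hL𝒜, -, h𝒜step⟩ := exists_finite_leftQuotient_closed_of_isRegular hL
  obtain ⟨ℬ, hℬfin, h0, hMℬ, hℬadd, hℬstep⟩ := exists_finite_leftQuotient_closed_of_isRegular hM
  refine isRegular_of_finite_of_leftQuotient_mem
    (h𝒜fin.image2 (fun A B => A * M + B) hℬfin) ⟨L, hL𝒜, 0, h0, add_zero _⟩ ?_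
  rintro _ ⟨A, hA, B, hB, rfl⟩ a
  by_cases hnil : [] ∈ A
  · refine ⟨_, h𝒜step A hA a, _, hℬadd _ (hℬstep M hMℬ a) _ (hℬstep B hB a), ?_⟩
    change _ = (A * M).leftQuotient [a] + B.leftQuotient [a]
    rw [leftQuotient_singleton_mul_of_nil_mem hnil, add_assoc]
  · refine ⟨_, h𝒜step A hA a, _, hℬstep B hB a, ?_⟩
    change _ = (A * M).leftQuotient [a] + B.leftQuotient [a]
    rw [leftQuotient_singleton_mul_of_nil_notMem hnil]

theorem isRegular_kstar (hL : L.IsRegular) : (L∗).IsRegular := by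
  obtain ⟨𝒬, hfin, -, hL𝒬, hadd, hstep⟩ := exists_finite_leftQuotient_closed_of_isRegular hL
  refine isRegular_of_finite_of_leftQuotient_mem ((hfin.image (· * L∗)).insert (L∗))
    (mem_insert _ _) ?_
  rintro _ (rfl | ⟨A, hA, rfl⟩) a
  · exact .inr ⟨_, hstep L hL𝒬 a, (leftQuotient_singleton_kstar a).symm⟩
  by_cases hnil : [] ∈ A
  · refine .inr ⟨_, hadd _ (hstep A hA a) _ (hstep L hL𝒬 a), ?_⟩
    rw [leftQuotient_singleton_mul_of_nil_mem hnil, leftQuotient_singleton_kstar]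
    exact add_mul _ _ _
  · exact .inr ⟨_, hstep A hA a, (leftQuotient_singleton_mul_of_nil_notMem hnil a).symm⟩

theorem IsRegLang.isRegular {L : Language X} (hL : IsRegLang L) : L.IsRegular := by
  induction hL with
  | finite _ h => exact isRegular_of_finite h
  | union _ _ _ _ hW hV => exact hW.add hV
  | concat _ _ _ _ hW hV => exact isRegular_mul hW hV
  | star _ _ hW => exact isRegular_kstar hW

end Regular

section Dense

variable {α : Type*} {L M : Language α}

/-- Density with respect to prefixes: every word can be prolonged to a word of `L`. -/
def DenseLang (L : Language α) : Prop := ∀ u, ∃ y, u ++ y ∈ L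

/-- Every word can be prolonged to a word of `L` by boundedly many letters. It is for such `L` that
almost every `ω`-word has a prefix in `L`, in the sense of category and of measure alike. -/
def BoundedlyDense (L : Language α) : Prop :=
  ∃ k : ℕ, ∀ u, ∃ y : List α, y.length ≤ k ∧ u ++ y ∈ L

/-- The words from which `L` can no longer be reached. -/
def deadWords (L : Language α) : Language α := {p | ∀ z, p ++ z ∉ L}

theorem DenseLang.boundedlyDense (h : DenseLang L) (hL : L.IsRegular) : BoundedlyDense L := by
  have hne : ∀ A ∈ range L.leftQuotient, ∃ y, y ∈ A := by
    rintro _ ⟨u, rfl⟩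
    exact h u
  choose! y hy using hne
  obtain ⟨k, hk⟩ := (hL.finite_range_leftQuotient.image fun A => (y A).length).bddAbove
  exact ⟨k, fun u => ⟨_, hk (mem_image_of_mem _ ⟨u, rfl⟩), hy _ ⟨u, rfl⟩⟩⟩

theorem BoundedlyDense.mul {v : List α} (hL : BoundedlyDense L) (hv : v ∈ M) :
    BoundedlyDense (L * M) := by
  obtain ⟨k, hk⟩ := hL
  refine ⟨k + v.length, fun u => ?_⟩
  obtain ⟨y, hy, hyL⟩ := hk u
  exact ⟨y ++ v, by simpa using hy, u ++ y, hyL, v, hv, List.append_assoc u y v⟩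

theorem leftQuotient_deadWords (u : List α) :
    (deadWords L).leftQuotient u = deadWords (L.leftQuotient u) := by
  ext y
  exact forall_congr' fun z => by rw [Language.mem_leftQuotient, List.append_assoc]

theorem isRegular_deadWords (hL : L.IsRegular) : (deadWords L).IsRegular := by
  refine .of_finite_range_leftQuotient ((hL.finite_range_leftQuotient.image deadWords).subset ?_)
  rintro _ ⟨u, rfl⟩
  exact ⟨_, ⟨u, rfl⟩, (leftQuotient_deadWords u).symm⟩

theorem exists_denseLang_leftQuotient [Nonempty α] (h : ¬ DenseLang (deadWords L)) :
    ∃ v ≠ [], DenseLang (L.leftQuotient v) := by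
  obtain ⟨u, hu⟩ := not_forall.1 h
  have hlive : ∀ y, ∃ z, u ++ y ++ z ∈ L := by
    intro y
    by_contra! hdead
    exact hu ⟨y, hdead⟩
  refine ⟨u ++ [Classical.arbitrary α], by simp, fun y => ?_⟩
  obtain ⟨z, hz⟩ := hlive (Classical.arbitrary α :: y)
  exact ⟨z, by simpa using hz⟩

end Dense

section Cylinder

variable {w u : List X} {ξ : ℕ → X}

theorem wcat_append (u v : List X) (ξ : ℕ → X) : wcat (u ++ v) ξ = wcat u (wcat v ξ) :=
  Stream'.append_append_stream u v ξ

theorem wcat_mem_cyl (w : List X) (ξ : ℕ → X) : wcat w ξ ∈ cyl w := ⟨ξ, rfl⟩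

theorem cyl_nonempty [Nonempty X] (w : List X) : (cyl w).Nonempty :=
  ⟨_, wcat_mem_cyl w fun _ => Classical.arbitrary X⟩

theorem cyl_nil : cyl ([] : List X) = univ :=
  eq_univ_of_forall fun ξ => ⟨ξ, rfl⟩

theorem cyl_append_subset (w u : List X) : cyl (w ++ u) ⊆ cyl w := by
  rintro _ ⟨ξ, rfl⟩
  exact ⟨wcat u ξ, wcat_append w u ξ⟩

theorem wcat_mem_cyl_append_iff : wcat w ξ ∈ cyl (w ++ u) ↔ ξ ∈ cyl u := by
  constructor
  · rintro ⟨η, h⟩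
    rw [wcat_append] at h
    exact ⟨η, Stream'.append_right_injective w _ _ h⟩
  · rintro ⟨η, rfl⟩
    exact ⟨η, (wcat_append w u η).symm⟩

theorem mem_cyl_iff_take_eq : ξ ∈ cyl w ↔ Stream'.take w.length ξ = w := by
  constructor
  · rintro ⟨η, rfl⟩
    exact (Stream'.take_append_of_le_length _ _ _ le_rfl).trans List.take_length
  · intro h
    have hsplit := Stream'.append_take_drop w.length ξ
    rw [h] at hsplit
    exact ⟨_, hsplit.symm⟩

theorem prefix_of_mem_cyl (hu : ξ ∈ cyl u) (hw : ξ ∈ cyl w) (h : u.length ≤ w.length) :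
    u <+: w := by
  rw [← mem_cyl_iff_take_eq.1 hu, ← mem_cyl_iff_take_eq.1 hw]
  exact Stream'.take_prefix_take_left _ _ ξ h

theorem take_eq_take_iff {s t : Stream' X} {n : ℕ} :
    s.take n = t.take n ↔ ∀ i < n, s.get i = t.get i := by
  simp only [List.ext_getElem_iff, Stream'.length_take, Stream'.take_get, true_and]
  exact ⟨fun h i hi => h i hi hi, fun h i hi _ => h i hi⟩

theorem cyl_eq_cylinder (h : ξ ∈ cyl w) : cyl w = PiNat.cylinder ξ w.length := by
  ext η
  have htake : η ∈ cyl w ↔ Stream'.take w.length η = Stream'.take w.length ξ := by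
    rw [mem_cyl_iff_take_eq, mem_cyl_iff_take_eq.1 h]
  rw [htake, PiNat.mem_cylinder_iff]
  exact take_eq_take_iff

theorem cyl_eq_iUnion (u : List X) : cyl u = ⋃ a, cyl (u ++ [a]) := by
  refine subset_antisymm ?_ (iUnion_subset fun a => cyl_append_subset u [a])
  rintro _ ⟨η, rfl⟩
  refine mem_iUnion.2 ⟨η 0, wcat_mem_cyl_append_iff.2 ⟨Stream'.tail η, ?_⟩⟩
  exact (Stream'.append_stream_head_tail η).symm

theorem pairwise_disjoint_cyl_append (u : List X) :
    Pairwise (Function.onFun Disjoint fun a => cyl (u ++ [a])) := by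
  refine fun a b hab => disjoint_left.2 fun ξ ha hb => hab ?_
  simpa using (prefix_of_mem_cyl ha hb (by simp)).eq_of_length (by simp)

end Cylinder

section OmegaPow

variable {V : Language X} {η : ℕ → X}

theorem flatten_map_range_mem_kstar {f : ℕ → List X} (hf : ∀ i, f i ∈ V) (k : ℕ) :
    ((List.range k).map f).flatten ∈ V∗ := by
  exact Language.join_mem_kstar (List.forall_mem_map.2 fun i _ => hf i)

theorem le_length_flatten_map_range {f : ℕ → List X} (hf : ∀ i, f i ≠ []) (k : ℕ) :
    k ≤ ((List.range k).map f).flatten.length := by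
  induction k with
  | zero => exact Nat.zero_le _
  | succ k ih =>
    have := List.length_pos_of_ne_nil (hf k)
    simp only [List.range_succ, List.map_append, List.flatten_append, List.length_append,
      List.map_singleton, List.flatten_singleton]
    lia

theorem notMem_deadWords_of_mem_omegaPow {p : List X} (hη : η ∈ omegaPow V) (hp : η ∈ cyl p) :
    p ∉ deadWords V∗ := by
  obtain ⟨f, hf, hη⟩ := hη
  obtain ⟨z, hz⟩ := prefix_of_mem_cyl hp (hη p.length)
    (le_length_flatten_map_range (fun i => (hf i).2) _)
  intro hdead
  exact hdead z (hz ▸ flatten_map_range_mem_kstar (fun i => (hf i).1) _)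

theorem mem_omegaPow_of_forall_exists_append (R : Set (List X)) (hnil : [] ∈ R)
    (hcyl : ∀ s ∈ R, η ∈ cyl s) (hstep : ∀ s ∈ R, ∃ a ∈ V, a ≠ [] ∧ s ++ a ∈ R) :
    η ∈ omegaPow V := by
  choose! g hgV hg hgR using hstep
  let S (n : ℕ) : List X := (fun s => s ++ g s)^[n] []
  have hS_succ (n : ℕ) : S (n + 1) = S n ++ g (S n) := Function.iterate_succ_apply' _ _ _
  have hS (n : ℕ) : S n ∈ R := by
    induction n with
    | zero => exact hnil
    | succ n ih => exact hS_succ n ▸ hgR _ ih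
  have hflatten (k : ℕ) : ((List.range k).map fun n => g (S n)).flatten = S k := by
    induction k with
    | zero => rfl
    | succ k ih =>
      rw [List.range_succ, List.map_append, List.flatten_append, ih, hS_succ, List.map_singleton,
        List.flatten_singleton]
  exact ⟨fun n => g (S n), fun n => ⟨hgV _ (hS n), hg _ (hS n)⟩,
    fun k => hflatten k ▸ hcyl _ (hS k)⟩

/- After a factor `v`, a word `q ∈ v⁻¹V∗` that is again followed by `v` completes `vq ∈ V∗` and
restores the initial situation, so the factorization can be continued for ever. -/
theorem mem_omegaPow_of_recurrent {v : List X} (hv : v ≠ []) (hη : η ∈ cyl v)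
    (hrec : ∀ s, η ∈ cyl (s ++ v) → ∃ q ∈ (V∗).leftQuotient v, η ∈ cyl (s ++ v ++ (q ++ v))) :
    η ∈ omegaPow V := by
  refine mem_omegaPow_of_forall_exists_append {s | ∃ t ∈ V∗, η ∈ cyl (s ++ t ++ v)}
    ⟨[], Language.nil_mem_kstar V, hη⟩ ?_ ?_
  · rintro s ⟨t, -, h⟩
    exact cyl_append_subset s _ (List.append_assoc s t v ▸ h)
  · rintro s ⟨t, ht, h⟩
    obtain ⟨t, ht, htne, h⟩ : ∃ t ∈ V∗, t ≠ [] ∧ η ∈ cyl (s ++ t ++ v) := by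
      by_cases htne : t = []
      · subst htne
        obtain ⟨q, hq, h⟩ := hrec s (by simpa using h)
        exact ⟨v ++ q, hq, by simp [hv], by simpa using h⟩
      · exact ⟨t, ht, htne, h⟩
    obtain ⟨a, haV, ha, t', ht', rfl⟩ := exists_append_of_mem_kstar ht htne
    exact ⟨a, haV, ha, t', ht', by simpa using h⟩

end OmegaPow

/-- Filters of sets of "almost all" `ω`-words, for which almost all words in a ball `w·X^ω` hit a
given boundedly dense language after `w`, and no ball is negligible. The residual filter and the
almost-everywhere filters of balanced measures are treated uniformly through this notion. -/
structure IsTypical (l : Filter (ℕ → X)) : Prop where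
  eventually_hits : ∀ P : Language X, BoundedlyDense P → ∀ w,
    ∀ᶠ ξ in l, ξ ∈ cyl w → ∃ p ∈ P, ξ ∈ cyl (w ++ p)
  compl_cyl_notMem : ∀ w, (cyl w)ᶜ ∉ l

namespace IsTypical

variable [Countable X] {l : Filter (ℕ → X)} [CountableInterFilter l] {W V : Language X}

theorem compl_catOmega_mem (hl : IsTypical l) (hV : (V∗).IsRegular)
    (hdead : DenseLang (deadWords V∗)) : (catOmega W (omegaPow V))ᶜ ∈ l := by
  have hits := eventually_countable_forall.2
    (hl.eventually_hits _ (hdead.boundedlyDense (isRegular_deadWords hV)))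
  filter_upwards [hits]
  rintro _ hξ ⟨w, -, η, hη, rfl⟩
  obtain ⟨p, hp, hηp⟩ := hξ w (wcat_mem_cyl w η)
  exact notMem_deadWords_of_mem_omegaPow hη (wcat_mem_cyl_append_iff.1 hηp) hp

theorem compl_catOmega_notMem [Nonempty X] (hl : IsTypical l) (hV : (V∗).IsRegular)
    (hdead : ¬ DenseLang (deadWords V∗)) {w : List X} (hw : w ∈ W) :
    (catOmega W (omegaPow V))ᶜ ∉ l := by
  intro hcompl
  obtain ⟨v, hv, hdense⟩ := exists_denseLang_leftQuotient hdead
  have hbdd : BoundedlyDense ((V∗).leftQuotient v * {v}) :=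
    (hdense.boundedlyDense (isRegular_leftQuotient hV v)).mul rfl
  have hits := eventually_countable_forall.2 (hl.eventually_hits _ hbdd)
  refine hl.compl_cyl_notMem (w ++ v) ?_
  filter_upwards [hits, hcompl]
  rintro _ hξ hnot ⟨η, rfl⟩
  rw [wcat_append] at hξ hnot
  refine hnot ⟨w, hw, wcat v η, ?_, rfl⟩
  refine mem_omegaPow_of_recurrent hv (wcat_mem_cyl v η) fun s hs => ?_
  obtain ⟨_, ⟨q, hq, _, rfl, rfl⟩, hqv⟩ := hξ (w ++ (s ++ v)) (wcat_mem_cyl_append_iff.2 hs)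
  rw [List.append_assoc] at hqv
  exact ⟨q, hq, wcat_mem_cyl_append_iff.1 hqv⟩

theorem compl_iUnion_catOmega_mem_iff [Nonempty X] (hl : IsTypical l) {ι : Type*} [Countable ι]
    {W V : ι → Language X} (hV : ∀ i, ((V i)∗).IsRegular) :
    (⋃ i, catOmega (W i) (omegaPow (V i)))ᶜ ∈ l ↔
      ∀ i, ∀ w ∈ W i, DenseLang (deadWords (V i)∗) := by
  rw [compl_iUnion, countable_iInter_mem]
  refine forall_congr' fun i => ⟨fun h w hw => ?_, fun h => ?_⟩
  · by_contra hdead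
    exact hl.compl_catOmega_notMem (hV i) hdead hw h
  · by_cases hW : ∃ w, w ∈ W i
    · obtain ⟨w, hw⟩ := hW
      exact hl.compl_catOmega_mem (hV i) (h w hw)
    · filter_upwards
      rintro ξ ⟨w, hw, -⟩
      exact hW ⟨w, hw⟩

end IsTypical

section Additive

variable {α : Type*} {m b : List α → ℝ} {c θ : ℝ} {k : ℕ}

theorem pow_length_mul_le (hc0 : 0 ≤ c) (hc : ∀ u a, c * m u ≤ m (u ++ [a])) (u y : List α) :
    c ^ y.length * m u ≤ m (u ++ y) := by
  induction y using List.reverseRecOn with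
  | nil => simp
  | append_singleton y a ih =>
    calc c ^ (y ++ [a]).length * m u = c * (c ^ y.length * m u) := by
          rw [List.length_append, List.length_singleton, pow_succ', mul_assoc]
      _ ≤ c * m (u ++ y) := by gcongr
      _ ≤ m (u ++ (y ++ [a])) := by
          rw [← List.append_assoc]
          exact hc (u ++ y) a

variable [Fintype α]

/-- The compatibility of the values `d u` of a finite measure on the cylinders `u·X^ω`. -/
def IsAdditive (d : List α → ℝ) : Prop := ∀ u, d u = ∑ a, d (u ++ [a])

theorem IsAdditive.append_le {d : List α → ℝ} (hd : IsAdditive d) (hd0 : ∀ u, 0 ≤ d u)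
    (u y : List α) : d (u ++ y) ≤ d u := by
  induction y using List.reverseRecOn with
  | nil => rw [List.append_nil]
  | append_singleton y a ih =>
    rw [← List.append_assoc]
    refine le_trans ?_ ((hd (u ++ y)).ge.trans ih)
    exact Finset.single_le_sum (fun a _ => hd0 (u ++ y ++ [a])) (Finset.mem_univ a)

/- The word `y` removes from `u` at least the proportion `c ^ k` of the mass `m u`. Since
`θ * m - b` is additive and nonnegative, it does not increase from `u` to `u ++ y`. -/
theorem le_mul_one_sub_pow_mul (hm : IsAdditive m) (hb : IsAdditive b) (hm0 : ∀ u, 0 ≤ m u)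
    (hc0 : 0 ≤ c) (hc1 : c ≤ 1) (hc : ∀ u a, c * m u ≤ m (u ++ [a]))
    (hzero : ∀ u, ∃ y : List α, y.length ≤ k ∧ b (u ++ y) = 0)
    (hθ : 0 ≤ θ) (hbm : ∀ u, b u ≤ θ * m u) (u : List α) : b u ≤ θ * (1 - c ^ k) * m u := by
  obtain ⟨y, hyk, hy⟩ := hzero u
  have hadd : IsAdditive fun u => θ * m u - b u := fun u => by
    rw [Finset.sum_sub_distrib, ← Finset.mul_sum, ← hm u, ← hb u]
  have hdecr : θ * m (u ++ y) - b (u ++ y) ≤ θ * m u - b u :=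
    hadd.append_le (fun u => sub_nonneg.2 (hbm u)) u y
  have hmass : c ^ k * m u ≤ m (u ++ y) :=
    (mul_le_mul_of_nonneg_right (pow_le_pow_of_le_one hc0 hc1 hyk) (hm0 u)).trans
      (pow_length_mul_le hc0 hc u y)
  linear_combination hdecr + θ * hmass + hy

theorem eq_zero_of_forall_exists_append_eq_zero (hm : IsAdditive m) (hb : IsAdditive b)
    (hb0 : ∀ u, 0 ≤ b u) (hbm : ∀ u, b u ≤ m u)
    (hc0 : 0 < c) (hc1 : c ≤ 1) (hc : ∀ u a, c * m u ≤ m (u ++ [a]))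
    (hzero : ∀ u, ∃ y : List α, y.length ≤ k ∧ b (u ++ y) = 0) (u : List α) : b u = 0 := by
  have hr0 : 0 ≤ 1 - c ^ k := sub_nonneg.2 (pow_le_one₀ hc0.le hc1)
  have hr1 : 1 - c ^ k < 1 := sub_lt_self 1 (pow_pos hc0 k)
  have hgeom (n : ℕ) : ∀ u, b u ≤ (1 - c ^ k) ^ n * m u := by
    induction n with
    | zero => simpa using hbm
    | succ n ih =>
      exact le_mul_one_sub_pow_mul hm hb (fun u => (hb0 u).trans (hbm u)) hc0.le hc1 hc hzero
        (pow_nonneg hr0 n) ih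
  have hlim : Filter.Tendsto (fun n => (1 - c ^ k) ^ n * m u) Filter.atTop (nhds (0 * m u)) :=
    (tendsto_pow_atTop_nhds_zero_of_lt_one hr0 hr1).mul_const _
  rw [zero_mul] at hlim
  exact le_antisymm (ge_of_tendsto' hlim fun n => hgeom n u) (hb0 u)

end Additive

section CantorSpace

theorem baireSpace_cantorTop (X : Type) : @BaireSpace (ℕ → X) (cantorTop X) :=
  let _ : TopologicalSpace X := ⊥
  have : DiscreteTopology X := ⟨rfl⟩
  inferInstanceAs (BaireSpace (ℕ → X))

theorem exists_uniform_measure (X : Type) [Fintype X] [Nonempty X] :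
    ∃ μ : @Measure (ℕ → X) (cantorBorel X),
      ∀ w : List X, μ (cyl w) = (Fintype.card X : ENNReal)⁻¹ ^ w.length := by
  let _ : TopologicalSpace X := ⊥
  have : DiscreteTopology X := ⟨rfl⟩
  let _ : MeasurableSpace X := borel X
  have : BorelSpace X := ⟨rfl⟩
  have hborel : cantorBorel X = MeasurableSpace.pi :=
    (Pi.borelSpace (X := fun _ : ℕ => X)).measurable_eq.symm
  rw [hborel]
  let ν : Measure X := (PMF.uniformOfFintype X).toMeasure
  have hν (a : X) : ν {a} = (Fintype.card X : ENNReal)⁻¹ := by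
    rw [PMF.toMeasure_apply_singleton _ _ (measurableSet_singleton a), PMF.uniformOfFintype_apply]
  refine ⟨Measure.infinitePi fun _ => ν, fun w => ?_⟩
  obtain ⟨ξ, hξ⟩ := cyl_nonempty w
  rw [cyl_eq_cylinder hξ, PiNat.cylinder_eq_pi,
    Measure.infinitePi_pi _ fun i _ => measurableSet_singleton (ξ i)]
  simp only [hν, Finset.prod_const, Finset.card_range]

local instance : TopologicalSpace (ℕ → X) := cantorTop X
local instance : MeasurableSpace (ℕ → X) := cantorBorel X
local instance : BaireSpace (ℕ → X) := baireSpace_cantorTop X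
local instance : BorelSpace (ℕ → X) := ⟨rfl⟩

theorem isClopen_cyl (w : List X) : IsClopen (cyl w) := by
  obtain hempty | ⟨ξ, hξ⟩ := (cyl w).eq_empty_or_nonempty
  · exact hempty ▸ isClopen_empty
  · let _ : TopologicalSpace X := ⊥
    have : DiscreteTopology X := ⟨rfl⟩
    rw [cyl_eq_cylinder hξ]
    refine ⟨?_, PiNat.isOpen_cylinder (fun _ => X) ξ w.length⟩
    rw [PiNat.cylinder_eq_pi]
    exact isClosed_set_pi fun _ _ => isClosed_discrete _

theorem isOpen_iUnion_cyl (P : Language X) (w : List X) : IsOpen (⋃ p ∈ P, cyl (w ++ p)) :=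
  isOpen_biUnion fun p _ => (isClopen_cyl (w ++ p)).isOpen

theorem exists_cyl_append_subset {U : Set (ℕ → X)} (hU : IsOpen U) {w : List X} {ξ : ℕ → X}
    (hξU : ξ ∈ U) (hξw : ξ ∈ cyl w) : ∃ u, cyl (w ++ u) ⊆ U := by
  let _ : TopologicalSpace X := ⊥
  have : DiscreteTopology X := ⟨rfl⟩
  obtain ⟨_, ⟨ζ, n, rfl⟩, hξζ, hsub⟩ :=
    (PiNat.isTopologicalBasis_cylinders fun _ => X).exists_subset_of_mem_open hξU hU
  obtain ⟨η, rfl⟩ := hξw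
  let u := Stream'.take n η
  have hmem : wcat w η ∈ cyl (w ++ u) :=
    wcat_mem_cyl_append_iff.2 ⟨Stream'.drop n η, (Stream'.append_take_drop n η).symm⟩
  have hn : n ≤ (w ++ u).length :=
    (Stream'.length_take n η).ge.trans (List.suffix_append w u).length_le
  refine ⟨u, ?_⟩
  calc cyl (w ++ u) = PiNat.cylinder (wcat w η) (w ++ u).length := cyl_eq_cylinder hmem
    _ ⊆ PiNat.cylinder (wcat w η) n := PiNat.cylinder_anti _ hn
    _ = PiNat.cylinder ζ n := PiNat.mem_cylinder_iff_eq.1 hξζ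
    _ ⊆ U := hsub

theorem isTypical_residual [Nonempty X] : IsTypical (residual (ℕ → X)) where
  eventually_hits P := by
    rintro ⟨k, hk⟩ w
    have hopen : IsOpen ((cyl w)ᶜ ∪ ⋃ p ∈ P, cyl (w ++ p)) :=
      (isClopen_cyl w).compl.isOpen.union (isOpen_iUnion_cyl P w)
    have hdense : Dense ((cyl w)ᶜ ∪ ⋃ p ∈ P, cyl (w ++ p)) := by
      refine dense_iff_inter_open.2 fun U hU ⟨ξ, hξ⟩ => ?_
      by_cases hξw : ξ ∈ cyl w
      · obtain ⟨u, hu⟩ := exists_cyl_append_subset hU hξ hξw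
        obtain ⟨y, -, hy⟩ := hk u
        obtain ⟨η, hη⟩ := cyl_nonempty (w ++ (u ++ y))
        refine ⟨η, hu (cyl_append_subset _ y ?_), .inr (mem_biUnion hy hη)⟩
        rwa [List.append_assoc]
      · exact ⟨ξ, hξ, .inl hξw⟩
    filter_upwards [residual_of_dense_open hopen hdense] with ξ hξ hξw
    simpa [hξw] using hξ
  compl_cyl_notMem w := not_isMeagre_of_isOpen (isClopen_cyl w).isOpen (cyl_nonempty w)

theorem isAdditive_measureReal_inter_cyl [Fintype X] (μ : Measure (ℕ → X)) [IsFiniteMeasure μ]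
    {B : Set (ℕ → X)} (hB : MeasurableSet B) (w : List X) :
    IsAdditive fun u => μ.real (B ∩ cyl (w ++ u)) := by
  intro u
  simp only [← List.append_assoc]
  rw [cyl_eq_iUnion (w ++ u), inter_iUnion]
  refine measureReal_iUnion_fintype (fun a b hab => ?_)
    fun a => hB.inter (isClopen_cyl _).isOpen.measurableSet
  exact (pairwise_disjoint_cyl_append (w ++ u) hab).mono inter_subset_right inter_subset_right

theorem Balanced.exists_real_mul_le {μ : Measure (ℕ → X)} [IsFiniteMeasure μ] (hbal : Balanced μ)
    (hpos : ∀ w, μ (cyl w) ≠ 0) : ∃ c : ℝ, 0 < c ∧ c ≤ 1 ∧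
      ∀ w x, c * μ.real (cyl w) ≤ μ.real (cyl (w ++ [x])) := by
  obtain ⟨c, hc0, hc⟩ := hbal
  have hmin : min c 1 ≠ ⊤ := (min_le_right c 1).trans_lt ENNReal.one_lt_top |>.ne
  refine ⟨(min c 1).toReal, ENNReal.toReal_pos (lt_min hc0 one_pos).ne' hmin,
    ENNReal.toReal_mono ENNReal.one_ne_top (min_le_right c 1), fun w x => ?_⟩
  rw [measureReal_def, ← ENNReal.toReal_mul]
  refine ENNReal.toReal_mono (measure_ne_top _ _) ?_
  calc min c 1 * μ (cyl w) ≤ c * μ (cyl w) := by gcongr; exact min_le_left c 1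
    _ ≤ μ (cyl (w ++ [x])) := (hc w x).resolve_left (hpos _)

theorem isTypical_ae [Finite X] [Nonempty X] {μ : Measure (ℕ → X)} [IsFiniteMeasure μ]
    (hsupp : FullSupport μ) (hbal : Balanced μ) : IsTypical (ae μ) := by
  have := Fintype.ofFinite X
  have hpos (w : List X) : μ (cyl w) ≠ 0 := (hsupp _ (isClopen_cyl w).isOpen (cyl_nonempty w)).ne'
  refine ⟨?_, fun w hw => hpos w (by rwa [mem_ae_iff, compl_compl] at hw)⟩
  rintro P ⟨k, hk⟩ w
  obtain ⟨c, hc0, hc1, hc⟩ := hbal.exists_real_mul_le hpos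
  let B : Set (ℕ → X) := (⋃ p ∈ P, cyl (w ++ p))ᶜ
  have hB : MeasurableSet B := (isOpen_iUnion_cyl P w).measurableSet.compl
  have hzero : ∀ u, ∃ y : List X, y.length ≤ k ∧ μ.real (B ∩ cyl (w ++ (u ++ y))) = 0 := by
    intro u
    obtain ⟨y, hyk, hy⟩ := hk u
    have hdisj : Disjoint B (cyl (w ++ (u ++ y))) :=
      disjoint_compl_left_iff_subset.2 (subset_biUnion_of_mem (u := fun p => cyl (w ++ p)) hy)
    exact ⟨y, hyk, by rw [hdisj.inter_eq, measureReal_empty]⟩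
  have hnull : μ.real (B ∩ cyl (w ++ [])) = 0 :=
    eq_zero_of_forall_exists_append_eq_zero (m := fun u => μ.real (cyl (w ++ u)))
      (by simpa using isAdditive_measureReal_inter_cyl μ .univ w)
      (isAdditive_measureReal_inter_cyl μ hB w) (fun _ => measureReal_nonneg)
      (fun _ => measureReal_mono inter_subset_right) hc0 hc1
      (fun u a => by simpa using hc (w ++ u) a) hzero []
  rw [List.append_nil, measureReal_eq_zero_iff, measure_eq_zero_iff_ae_notMem] at hnull
  filter_upwards [hnull] with ξ hξ hξw
  simpa [B, hξw] using hξ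

theorem exists_fullSupport_balanced (X : Type) [Finite X] [Nonempty X] :
    ∃ μ : Measure (ℕ → X), FiniteNonNull μ ∧ FullSupport μ ∧ Balanced μ := by
  have := Fintype.ofFinite X
  obtain ⟨μ, hμ⟩ := exists_uniform_measure X
  have huniv : μ univ = 1 := by rw [← cyl_nil, hμ, List.length_nil, pow_zero]
  have hpos : (0 : ENNReal) < (Fintype.card X : ENNReal)⁻¹ := by simp
  refine ⟨μ, by simp [FiniteNonNull, huniv], fun U hU ⟨ξ, hξ⟩ => ?_, _, hpos, fun w x => .inr ?_⟩
  · obtain ⟨u, hu⟩ := exists_cyl_append_subset hU hξ (w := []) (cyl_nil ▸ mem_univ ξ)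
    calc 0 < μ (cyl ([] ++ u)) := hμ _ ▸ ENNReal.pow_pos hpos _
      _ ≤ μ U := measure_mono hu
  · rw [hμ, hμ, List.length_append, List.length_singleton, pow_succ']

theorem isMeagre_iUnion_catOmega_iff_measure_eq_zero [Finite X] [Nonempty X]
    {ι : Type*} [Countable ι] {W V : ι → Language X} (hV : ∀ i, ((V i)∗).IsRegular)
    {μ : Measure (ℕ → X)} [IsFiniteMeasure μ] (hsupp : FullSupport μ) (hbal : Balanced μ) :
    IsMeagre (⋃ i, catOmega (W i) (omegaPow (V i))) ↔
      μ (⋃ i, catOmega (W i) (omegaPow (V i))) = 0 := by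
  rw [IsMeagre, isTypical_residual.compl_iUnion_catOmega_mem_iff hV,
    ← (isTypical_ae hsupp hbal).compl_iUnion_catOmega_mem_iff hV, mem_ae_iff, compl_compl]

theorem stmt6_general [Finite X] [Nonempty X] {ι : Type*} [Countable ι] {W V : ι → Language X}
    (hV : ∀ i, ((V i)∗).IsRegular) :
    IsMeagre (⋃ i, catOmega (W i) (omegaPow (V i))) ↔
      ∀ μ : Measure (ℕ → X), FiniteNonNull μ → FullSupport μ → Balanced μ →
        μ (⋃ i, catOmega (W i) (omegaPow (V i))) = 0 := by
  have key {μ : Measure (ℕ → X)} (hfin : FiniteNonNull μ) (hsupp : FullSupport μ)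
      (hbal : Balanced μ) :=
    have : IsFiniteMeasure μ := ⟨hfin.2⟩
    isMeagre_iUnion_catOmega_iff_measure_eq_zero (W := W) hV hsupp hbal
  constructor
  · exact fun h μ hfin hsupp hbal => (key hfin hsupp hbal).1 h
  · intro h
    obtain ⟨μ, hfin, hsupp, hbal⟩ := exists_fullSupport_balanced X
    exact (key hfin hsupp hbal).2 (h μ hfin hsupp hbal)

end CantorSpace

theorem stmt6 {X : Type} [Fintype X] (hX : 2 ≤ Fintype.card X)
    (F : Set (ℕ → X)) (hreg : IsRegOmega F) :
    @IsMeagre _ (cantorTop X) F ↔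
      ∀ μ : @MeasureTheory.Measure (ℕ → X) (cantorBorel X),
        FiniteNonNull μ → FullSupport μ → Balanced μ → μ F = 0 := by
  have : Nonempty X := Fintype.card_pos_iff.1 (by lia)
  obtain ⟨n, W, V, hWV, rfl⟩ := hreg
  exact stmt6_general fun i => isRegular_kstar (IsRegLang.isRegular (hWV i).2)

end AutoBaire
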